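/- arXiv:2006.07861 — 5 statements merged into one kernel-verified Lean document; each statement's English description precedes it below -/
import Mathlib

section
/- There is an isomorphism of F2-algebras A → G sending Sq^r to Sq^{2r} for every r ≥ 0; equivalently, the two-sided ideals I_A and I_G of the free algebra F coincide, so the identity on generators induces an algebra isomorphism F/I_A ≅ F/I_G. -/
open Finset

/-- The free associative unital `F2`-algebra on generators `x_1, x_2, x_3, …`. -/
noncomputable abbrev FreeSteenrod : Type := FreeAlgebra (ZMod 2) ℕ+

/-- The generators `x_r` for `r ≥ 1`, with `x_0` denoting the unit `1`. -/
noncomputable def xgen (n : ℕ) : FreeSteenrod :=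
  if h : n = 0 then 1 else FreeAlgebra.ι (ZMod 2) (⟨n, Nat.pos_of_ne_zero h⟩ : ℕ+)

/-- The classical Adem element
`a(r,s) = x_r x_s + Σ_{t=0}^{⌊r/2⌋} C(s−t−1, r−2t) x_{r+s−t} x_t` (mod 2 coefficients). -/
noncomputable def ademClassical (r s : ℕ) : FreeSteenrod :=
  xgen r * xgen s +
    ∑ t ∈ Finset.range (r / 2 + 1),
      (Nat.choose (s - t - 1) (r - 2 * t) : ZMod 2) • (xgen (r + s - t) * xgen t)

/-- The even motivic (`τ = 0`) Adem element
`g(r,s) = x_r x_s + Σ_{t=0}^{⌊r/2⌋} C(2s−2t−1, 2r−4t) x_{r+s−t} x_t` (mod 2 coefficients). -/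
noncomputable def ademMotivicEven (r s : ℕ) : FreeSteenrod :=
  xgen r * xgen s +
    ∑ t ∈ Finset.range (r / 2 + 1),
      (Nat.choose (2 * s - 2 * t - 1) (2 * r - 4 * t) : ZMod 2) • (xgen (r + s - t) * xgen t)

theorem choose_mul_add_mul_modEq {p a : ℕ} [Fact p.Prime] (ha : a < p) (m k : ℕ) :
    (p * m + a).choose (p * k) ≡ m.choose k [MOD p] := by
  have hp : 0 < p := (Fact.out : p.Prime).pos
  have hdiv : (p * m + a) / p = m := by
    rw [Nat.mul_add_div hp, Nat.div_eq_of_lt ha, add_zero]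
  have lucas := Choose.choose_modEq_choose_mod_mul_choose_div_nat
    (n := p * m + a) (k := p * k) (p := p)
  rwa [hdiv, Nat.mul_div_cancel_left k hp, Nat.mul_mod_right, Nat.choose_zero_right,
    one_mul] at lucas

theorem choose_motivic_eq_choose_classical {s t : ℕ} (hts : t < s) (r : ℕ) :
    ((2 * s - 2 * t - 1).choose (2 * r - 4 * t) : ZMod 2) =
      ((s - t - 1).choose (r - 2 * t) : ZMod 2) := by
  have top : 2 * s - 2 * t - 1 = 2 * (s - t - 1) + 1 := by omega
  have bottom : 2 * r - 4 * t = 2 * (r - 2 * t) := by omega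
  rw [top, bottom, ZMod.natCast_eq_natCast_iff]
  exact choose_mul_add_mul_modEq one_lt_two _ _

theorem ademMotivicEven_eq_ademClassical {r s : ℕ} (hrs : r < 2 * s) :
    ademMotivicEven r s = ademClassical r s := by
  unfold ademMotivicEven ademClassical
  congr 1
  refine Finset.sum_congr rfl fun t ht => ?_
  have hts : t < s := by
    rw [Finset.mem_range] at ht
    omega
  rw [choose_motivic_eq_choose_classical hts]

/-- The two-sided ideal of classical Adem relations coincides with the two-sided ideal of
even motivic (`τ = 0`) Adem relations, so the identity on generators induces an isomorphism
of `F2`-algebras `A = F/I_A ≅ G = F/I_G` sending `Sq^r` to `Sq^{2r}`. -/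
theorem stmt_1 :
    TwoSidedIdeal.span {y : FreeSteenrod | ∃ r s : ℕ, 0 < r ∧ r < 2 * s ∧ y = ademClassical r s}
      = TwoSidedIdeal.span
          {y : FreeSteenrod | ∃ r s : ℕ, 0 < r ∧ r < 2 * s ∧ y = ademMotivicEven r s} := by
  congr 1
  ext y
  refine exists₂_congr fun r s => and_congr_right fun _ => and_congr_right fun hrs => ?_
  rw [ademMotivicEven_eq_ademClassical hrs]
end

section
/- Let η : 𝟙_C ⟶ E exhibit E as an idempotent object of C, and let A be an object of C such that E ⊗ A is a zero object. Then for every object Y of C, every morphism f : A ⟶ E ⊗ Y is the zero morphism. -/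
open CategoryTheory MonoidalCategory Limits

section InsertLeft

variable {C : Type*} [Category C] [MonoidalCategory C] {E : C} (η : 𝟙_ C ⟶ E)

/-- The map `X ≅ 𝟙_ C ⊗ X ⟶ E ⊗ X` inserting a morphism `η : 𝟙_ C ⟶ E` on the left of `X`.
The object `E` is idempotent, via `η`, when `insertLeft η E` is an isomorphism. -/
def insertLeft (X : C) : X ⟶ E ⊗ X :=
  (λ_ X).inv ≫ η ▷ X

theorem insertLeft_naturality {X Y : C} (f : X ⟶ Y) :
    f ≫ insertLeft η Y = insertLeft η X ≫ E ◁ f := by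
  simp only [insertLeft, Category.assoc, leftUnitor_inv_naturality_assoc, whisker_exchange]

theorem insertLeft_tensor (X Y : C) :
    insertLeft η (X ⊗ Y) = insertLeft η X ▷ Y ≫ (α_ E X Y).hom := by
  simp [insertLeft]

theorem isSplitMono_insertLeft_tensor (X Y : C) [IsSplitMono (insertLeft η X)] :
    IsSplitMono (insertLeft η (X ⊗ Y)) := by
  have whiskered : IsSplitMono (insertLeft η X ▷ Y) :=
    inferInstanceAs (IsSplitMono ((tensorRight Y).map (insertLeft η X)))
  rw [insertLeft_tensor]
  infer_instance

theorem hom_ext_of_isInitial_tensor {A M : C} [Mono (insertLeft η M)]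
    (hA : IsInitial (E ⊗ A)) (f g : A ⟶ M) : f = g := by
  rw [← cancel_mono (insertLeft η M), insertLeft_naturality, insertLeft_naturality,
    hA.hom_ext (E ◁ f) (E ◁ g)]

/-- A retraction of `insertLeft η E` is a multiplication on `E` with left unit `η`, so this covers
all monoid objects `E`, not only the idempotent ones. -/
theorem stmt_2_general [IsSplitMono (insertLeft η E)] {A : C} (hA : IsInitial (E ⊗ A))
    (Y : C) (f g : A ⟶ E ⊗ Y) : f = g :=
  have := isSplitMono_insertLeft_tensor η E Y
  hom_ext_of_isInitial_tensor η hA f g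

end InsertLeft

/-- If `η : 𝟙_C ⟶ E` exhibits `E` as an idempotent object of a monoidal category `C` with
zero morphisms, and `A` is an object such that `E ⊗ A` is a zero object, then every morphism
`f : A ⟶ E ⊗ Y` is zero. -/
theorem stmt_2 {C : Type*} [Category C] [MonoidalCategory C] [HasZeroMorphisms C]
    {E : C} (η : 𝟙_ C ⟶ E)
    (hη : IsIso ((λ_ E).inv ≫ (η ▷ E)))
    {A : C} (hA : IsZero (E ⊗ A))
    (Y : C) (f : A ⟶ E ⊗ Y) : f = 0 :=
  have : IsIso (insertLeft η E) := hη
  stmt_2_general η hA.isInitial Y f 0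
end

section
/- Let A′ →^ε 𝟙_C →^η E →^δ A′⟦1⟧ be a distinguished triangle in C such that the composite A′ ⊗ A′ →^{ε ⊗ id} 𝟙_C ⊗ A′ ≅ A′ (ε ⊗ id_{A′} followed by the left unitor) is an isomorphism. Then E ⊗ A′ and A′ ⊗ E are zero objects of C, and η exhibits E as an idempotent object. -/
open CategoryTheory MonoidalCategory Limits Pretriangulated

section DistinguishedTriangle

variable {C : Type*} [Category C] [MonoidalCategory C]
  [Preadditive C] [HasZeroObject C] [HasShift C ℤ]
  [∀ n : ℤ, (shiftFunctor C n).Additive] [Pretriangulated C]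
  (W : C) [(tensorRight W).CommShift ℤ] [(tensorRight W).IsTriangulated]

lemma isZero_obj₃_tensor_iff_isIso_mor₁_whiskerRight {T : Triangle C} (hT : T ∈ distTriang C) :
    IsZero (T.obj₃ ⊗ W) ↔ IsIso (T.mor₁ ▷ W) :=
  Triangle.isZero₃_iff_isIso₁ _ ((tensorRight W).map_distinguished T hT)

lemma isZero_obj₁_tensor_iff_isIso_mor₂_whiskerRight {T : Triangle C} (hT : T ∈ distTriang C) :
    IsZero (T.obj₁ ⊗ W) ↔ IsIso (T.mor₂ ▷ W) :=
  Triangle.isZero₁_iff_isIso₂ _ ((tensorRight W).map_distinguished T hT)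

end DistinguishedTriangle

theorem stmt_3_general {C : Type*} [Category C] [MonoidalCategory C] [BraidedCategory C]
    [Preadditive C] [HasZeroObject C] [HasShift C ℤ]
    [∀ n : ℤ, (shiftFunctor C n).Additive] [Pretriangulated C]
    [∀ W : C, (tensorRight W).CommShift ℤ] [∀ W : C, (tensorRight W).IsTriangulated]
    {A' E : C} (ε : A' ⟶ 𝟙_ C) (η : 𝟙_ C ⟶ E) (δ : E ⟶ A'⟦(1 : ℤ)⟧)
    (hT : Triangle.mk ε η δ ∈ distTriang C)
    (hA : IsIso ((ε ▷ A') ≫ (λ_ A').hom)) :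
    IsZero (E ⊗ A') ∧ IsZero (A' ⊗ E) ∧ IsIso ((λ_ E).inv ≫ (η ▷ E)) := by
  have isIso_ε_whiskerRight : IsIso (ε ▷ A') := (isIso_comp_right_iff _ (λ_ A').hom).1 hA
  have isZero_E_tensor_A' : IsZero (E ⊗ A') :=
    (isZero_obj₃_tensor_iff_isIso_mor₁_whiskerRight A' hT).2 isIso_ε_whiskerRight
  have isZero_A'_tensor_E : IsZero (A' ⊗ E) := isZero_E_tensor_A'.of_iso (β_ A' E)
  have isIso_η_whiskerRight : IsIso (η ▷ E) :=
    (isZero_obj₁_tensor_iff_isIso_mor₂_whiskerRight E hT).1 isZero_A'_tensor_E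
  exact ⟨isZero_E_tensor_A', isZero_A'_tensor_E, inferInstance⟩

/-- Let `C` be a symmetric monoidal pretriangulated category such that, for every object `W`,
the functors `W ⊗ −` and `− ⊗ W` are additive and triangulated (they commute with the shift and
send distinguished triangles to distinguished triangles).  If
`A′ →^ε 𝟙_C →^η E →^δ A′⟦1⟧` is a distinguished triangle such that the composite
`A′ ⊗ A′ →^{ε ▷ A′} 𝟙_C ⊗ A′ ≅ A′` is an isomorphism, then `E ⊗ A′` and `A′ ⊗ E` are zero
objects and `η` exhibits `E` as an idempotent object. -/
theorem stmt_3 {C : Type*} [Category C] [MonoidalCategory C] [SymmetricCategory C]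
    [Preadditive C] [HasZeroObject C] [HasShift C ℤ]
    [∀ n : ℤ, (shiftFunctor C n).Additive] [Pretriangulated C]
    [∀ W : C, (tensorLeft W).Additive] [∀ W : C, (tensorRight W).Additive]
    [∀ W : C, (tensorLeft W).CommShift ℤ] [∀ W : C, (tensorRight W).CommShift ℤ]
    [∀ W : C, (tensorLeft W).IsTriangulated] [∀ W : C, (tensorRight W).IsTriangulated]
    {A' E : C} (ε : A' ⟶ 𝟙_ C) (η : 𝟙_ C ⟶ E) (δ : E ⟶ A'⟦(1 : ℤ)⟧)
    (hT : Triangle.mk ε η δ ∈ distTriang C)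
    (hA : IsIso ((ε ▷ A') ≫ (λ_ A').hom)) :
    IsZero (E ⊗ A') ∧ IsZero (A' ⊗ E) ∧ IsIso ((λ_ E).inv ≫ (η ▷ E)) :=
  stmt_3_general ε η δ hT hA
end

section
/- If η : 𝟙_C ⟶ E exhibits E as an idempotent object of the symmetric monoidal category C, then there exists a unique morphism μ : E ⊗ E ⟶ E such that (E, η, μ) is a commutative monoid object in C; moreover this μ is an isomorphism. -/
open CategoryTheory MonoidalCategory

/-!
The multiplication is forced to be the inverse of `η ▷ E` followed by the left unitor, and the
left unit law and associativity come from cancelling `η ▷ E`. The right unit law asks that the two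
maps `E ⟶ E ⊗ E` inserting `η` on the left and on the right agree. They agree after precomposition
with `η`, and this suffices: `E ◁ η` is invertible, so the two maps become equal after tensoring
with `E`, and tensoring with `E` is faithful on maps into `E ⊗ E`, because `η ▷ (E ⊗ E)` is
invertible. Comparing the two insertions through the braiding shows that `β_ E E` is the identity,
whence commutativity.
-/

section Monoidal

variable {C : Type*} [Category C] [MonoidalCategory C] {E X Y : C}

theorem eq_of_whiskerLeft_eq (η : 𝟙_ C ⟶ E) [Mono (η ▷ Y)] {f g : X ⟶ Y}
    (h : E ◁ f = E ◁ g) : f = g := by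
  have h_unit : 𝟙_ C ◁ f = 𝟙_ C ◁ g := by
    rw [← cancel_mono (η ▷ Y), whisker_exchange, whisker_exchange, h]
  exact (whiskerLeft_iff f g).mp h_unit

theorem eq_of_unit_comp_eq (η : 𝟙_ C ⟶ E) [Epi (E ◁ η)] [Mono (η ▷ Y)] {f g : E ⟶ Y}
    (h : η ≫ f = η ≫ g) : f = g := by
  apply eq_of_whiskerLeft_eq η
  rw [← cancel_epi (E ◁ η), ← whiskerLeft_comp, ← whiskerLeft_comp, h]

theorem isIso_whiskerRight_tensor (f : X ⟶ Y) (A B : C) [IsIso (f ▷ A)] :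
    IsIso (f ▷ (A ⊗ B)) := by
  rw [whiskerRight_tensor]
  infer_instance

theorem leftUnitor_inv_whiskerRight_eq_rightUnitor_inv_whiskerLeft (η : 𝟙_ C ⟶ E)
    [IsIso (η ▷ E)] [Epi (E ◁ η)] : (λ_ E).inv ≫ η ▷ E = (ρ_ E).inv ≫ E ◁ η := by
  have := isIso_whiskerRight_tensor η E E
  apply eq_of_unit_comp_eq η
  rw [leftUnitor_inv_naturality_assoc, rightUnitor_inv_naturality_assoc, whisker_exchange,
    unitors_inv_equal]

/-- The multiplication `E ⊗ E ≅ E` of an idempotent object `η : 𝟙_ C ⟶ E`, where idempotency is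
expressed as invertibility of `η ▷ E`. -/
noncomputable def idempotentMulIso (η : 𝟙_ C ⟶ E) [IsIso (η ▷ E)] : E ⊗ E ≅ E :=
  (asIso (η ▷ E)).symm ≪≫ λ_ E

theorem whiskerRight_comp_idempotentMulIso_hom (η : 𝟙_ C ⟶ E) [IsIso (η ▷ E)] :
    η ▷ E ≫ (idempotentMulIso η).hom = (λ_ E).hom := by
  simp [idempotentMulIso]

theorem eq_idempotentMulIso_hom {η : 𝟙_ C ⟶ E} [IsIso (η ▷ E)] {μ : E ⊗ E ⟶ E}
    (one_mul : η ▷ E ≫ μ = (λ_ E).hom) : μ = (idempotentMulIso η).hom := by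
  rw [← cancel_epi (η ▷ E), one_mul, whiskerRight_comp_idempotentMulIso_hom]

theorem whiskerLeft_comp_idempotentMulIso_hom (η : 𝟙_ C ⟶ E) [IsIso (η ▷ E)] [Epi (E ◁ η)] :
    E ◁ η ≫ (idempotentMulIso η).hom = (ρ_ E).hom := by
  rw [← cancel_epi (ρ_ E).inv, ← Category.assoc,
    ← leftUnitor_inv_whiskerRight_eq_rightUnitor_inv_whiskerLeft, Category.assoc,
    whiskerRight_comp_idempotentMulIso_hom, Iso.inv_hom_id, Iso.inv_hom_id]

theorem mul_assoc_of_one_mul {η : 𝟙_ C ⟶ E} [Epi (η ▷ E ▷ E)] {μ : E ⊗ E ⟶ E}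
    (one_mul : η ▷ E ≫ μ = (λ_ E).hom) :
    μ ▷ E ≫ μ = (α_ E E E).hom ≫ E ◁ μ ≫ μ := by
  rw [← cancel_epi (η ▷ E ▷ E)]
  calc η ▷ E ▷ E ≫ μ ▷ E ≫ μ
      = (λ_ E).hom ▷ E ≫ μ := by rw [← comp_whiskerRight_assoc, one_mul]
    _ = (α_ (𝟙_ C) E E).hom ≫ 𝟙_ C ◁ μ ≫ (λ_ E).hom := by simp
    _ = (α_ (𝟙_ C) E E).hom ≫ 𝟙_ C ◁ μ ≫ η ▷ E ≫ μ := by rw [one_mul]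
    _ = η ▷ E ▷ E ≫ (α_ E E E).hom ≫ E ◁ μ ≫ μ := by
      rw [whisker_exchange_assoc, associator_naturality_left_assoc]

end Monoidal

section Braided

variable {C : Type*} [Category C] [MonoidalCategory C] [BraidedCategory C] {E X Y : C}

theorem isIso_whiskerLeft_of_isIso_whiskerRight (f : X ⟶ Y) (A : C) [IsIso (f ▷ A)] :
    IsIso (A ◁ f) := by
  have : IsIso (A ◁ f ≫ (β_ A Y).hom) := by
    rw [BraidedCategory.braiding_naturality_right]
    infer_instance
  exact IsIso.of_isIso_comp_right (A ◁ f) (β_ A Y).hom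

theorem braiding_hom_eq_id_of_idempotent (η : 𝟙_ C ⟶ E) [IsIso (η ▷ E)] :
    (β_ E E).hom = 𝟙 (E ⊗ E) := by
  have := isIso_whiskerLeft_of_isIso_whiskerRight η E
  rw [← cancel_epi (η ▷ E), ← cancel_epi (λ_ E).inv]
  calc (λ_ E).inv ≫ η ▷ E ≫ (β_ E E).hom
      = (λ_ E).inv ≫ (β_ (𝟙_ C) E).hom ≫ E ◁ η := by
        rw [BraidedCategory.braiding_naturality_left]
    _ = (ρ_ E).inv ≫ E ◁ η := by simp
    _ = (λ_ E).inv ≫ η ▷ E ≫ 𝟙 (E ⊗ E) := by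
        rw [Category.comp_id, leftUnitor_inv_whiskerRight_eq_rightUnitor_inv_whiskerLeft]

theorem stmt_6_general (η : 𝟙_ C ⟶ E) (hη : IsIso ((λ_ E).inv ≫ (η ▷ E))) :
    (∃! μ : E ⊗ E ⟶ E,
      (η ▷ E) ≫ μ = (λ_ E).hom ∧
      (E ◁ η) ≫ μ = (ρ_ E).hom ∧
      (μ ▷ E) ≫ μ = (α_ E E E).hom ≫ (E ◁ μ) ≫ μ ∧
      (β_ E E).hom ≫ μ = μ) ∧
    (∀ μ : E ⊗ E ⟶ E,
      ((η ▷ E) ≫ μ = (λ_ E).hom ∧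
       (E ◁ η) ≫ μ = (ρ_ E).hom ∧
       (μ ▷ E) ≫ μ = (α_ E E E).hom ≫ (E ◁ μ) ≫ μ ∧
       (β_ E E).hom ≫ μ = μ) → IsIso μ) := by
  have : IsIso (η ▷ E) := IsIso.of_isIso_comp_left (λ_ E).inv (η ▷ E)
  have := isIso_whiskerLeft_of_isIso_whiskerRight η E
  have one_mul := whiskerRight_comp_idempotentMulIso_hom η
  have mul_one := whiskerLeft_comp_idempotentMulIso_hom η
  have mul_comm : (β_ E E).hom ≫ (idempotentMulIso η).hom = (idempotentMulIso η).hom := by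
    rw [braiding_hom_eq_id_of_idempotent η, Category.id_comp]
  refine ⟨⟨(idempotentMulIso η).hom,
    ⟨one_mul, mul_one, mul_assoc_of_one_mul one_mul, mul_comm⟩, ?unique⟩, ?isIso⟩
  case unique =>
    rintro μ ⟨hμ, -⟩
    exact eq_idempotentMulIso_hom hμ
  case isIso =>
    rintro μ ⟨hμ, -⟩
    rw [eq_idempotentMulIso_hom hμ]
    infer_instance

end Braided

/-- If `η : 𝟙_C ⟶ E` exhibits `E` as an idempotent object of a symmetric monoidal category
`C`, then there exists a unique morphism `μ : E ⊗ E ⟶ E` such that `(E, η, μ)` is a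
commutative monoid object in `C`; moreover this `μ` is an isomorphism. -/
theorem stmt_6 {C : Type*} [Category C] [MonoidalCategory C] [SymmetricCategory C]
    {E : C} (η : 𝟙_ C ⟶ E) (hη : IsIso ((λ_ E).inv ≫ (η ▷ E))) :
    (∃! μ : E ⊗ E ⟶ E,
      (η ▷ E) ≫ μ = (λ_ E).hom ∧
      (E ◁ η) ≫ μ = (ρ_ E).hom ∧
      (μ ▷ E) ≫ μ = (α_ E E E).hom ≫ (E ◁ μ) ≫ μ ∧
      (β_ E E).hom ≫ μ = μ) ∧
    (∀ μ : E ⊗ E ⟶ E,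
      ((η ▷ E) ≫ μ = (λ_ E).hom ∧
       (E ◁ η) ≫ μ = (ρ_ E).hom ∧
       (μ ▷ E) ≫ μ = (α_ E E E).hom ≫ (E ◁ μ) ≫ μ ∧
       (β_ E E).hom ≫ μ = μ) → IsIso μ) :=
  stmt_6_general η hη
end

section
/- Every Λ-linear map f : N → H ⊗_{F2} N' takes values in the subspace r_∅ ⊗ N'. Consequently, the natural map Hom_{F2}(N, N') → Hom_Λ(N, H ⊗_{F2} N'), sending g to the map n ↦ r_∅ ⊗ g(n), is a bijection. -/
open TensorProduct

set_option synthInstance.maxHeartbeats 1000000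
set_option maxHeartbeats 1000000

/-- `Λ`, the exterior algebra over `F2` on a countable family of generators
`Q_0, Q_1, Q_2, …` (the exterior algebra of the free `F2`-module with basis indexed by `ℕ`). -/
noncomputable abbrev IsoLambda : Type := ExteriorAlgebra (ZMod 2) (ℕ →₀ ZMod 2)

/-- `H`, the `F2`-vector space with basis `{r_I : I a finite subset of ℕ}`, modelling the
isotropic motivic cohomology of the point. -/
abbrev IsoH : Type := Finset ℕ →₀ ZMod 2

/-- The generator `Q_j` of the exterior algebra `Λ`. -/
noncomputable def isoQ (j : ℕ) : IsoLambda :=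
  ExteriorAlgebra.ι (ZMod 2) (Finsupp.single j (1 : ZMod 2))

/-- The basis element `r_I` of `H`. -/
noncomputable def isoR (I : Finset ℕ) : IsoH := Finsupp.single I (1 : ZMod 2)

/-!
In `H ⊗ N'`, the coefficient of `Q_j x` at `I ∖ {j}` is the coefficient of `x` at `I`, whenever
`j ∈ I`. An element killed by all `Q_j` therefore has no coefficient at any nonempty `I`, i.e. it
lies in `r_∅ ⊗ N'`; the values of a `Λ`-linear map from a trivial module are such elements.
Conversely, all `Q_j` kill `r_∅ ⊗ N'`, and the `Q_j` generate `Λ`, so every `F2`-linear map from a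
trivial module into `r_∅ ⊗ N'` is `Λ`-linear.
-/

section Generators

theorem map_smul_of_adjoin_eq_top {R A M P : Type*} [CommSemiring R] [Semiring A] [Algebra R A]
    [AddCommMonoid M] [Module R M] [Module A M] [IsScalarTower R A M]
    [AddCommMonoid P] [Module R P] [Module A P] [IsScalarTower R A P]
    {s : Set A} (hs : Algebra.adjoin R s = ⊤) (f : M →ₗ[R] P)
    (hf : ∀ a ∈ s, ∀ m, f (a • m) = a • f m) (a : A) (m : M) : f (a • m) = a • f m := by
  have ha : a ∈ Algebra.adjoin R s := hs ▸ Algebra.mem_top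
  induction ha using Algebra.adjoin_induction generalizing m with
  | mem a ha => exact hf a ha m
  | algebraMap r => rw [algebraMap_smul, algebraMap_smul, map_smul]
  | add a b _ _ iha ihb => rw [add_smul, map_add, iha, ihb, add_smul]
  | mul a b _ _ iha ihb => rw [mul_smul, iha, ihb, mul_smul]

theorem adjoin_range_exteriorAlgebra_ι_comp {R M κ : Type*} [CommRing R] [AddCommGroup M]
    [Module R M] {v : κ → M} (hv : Submodule.span R (Set.range v) = ⊤) :
    Algebra.adjoin R (Set.range (ExteriorAlgebra.ι R ∘ v)) = ⊤ := by
  have ι_mem (m : M) :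
      ExteriorAlgebra.ι R m ∈ Algebra.adjoin R (Set.range (ExteriorAlgebra.ι R ∘ v)) := by
    apply Algebra.span_le_adjoin
    rw [Set.range_comp, Submodule.span_image, hv]
    exact Submodule.mem_map_of_mem Submodule.mem_top
  refine Algebra.eq_top_iff.2 fun a => ?_
  induction a using ExteriorAlgebra.induction with
  | algebraMap r => exact algebraMap_mem _ r
  | ι m => exact ι_mem m
  | mul a b ha hb => exact mul_mem ha hb
  | add a b ha hb => exact add_mem ha hb

theorem adjoin_range_isoQ : Algebra.adjoin (ZMod 2) (Set.range isoQ) = ⊤ :=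
  adjoin_range_exteriorAlgebra_ι_comp (v := fun j : ℕ => Finsupp.single j (1 : ZMod 2))
    (by simpa using (Finsupp.basisSingleOne (R := ZMod 2) (ι := ℕ)).span_eq)

end Generators

section Coefficients

variable {R A κ N : Type*} [DecidableEq κ] [CommSemiring R] [AddCommMonoid N] [Module R N]

theorem eq_single_one_tmul_of_forall_ne {i : κ} {x : (κ →₀ R) ⊗[R] N}
    (hx : ∀ k ≠ i, finsuppScalarLeft R N κ x k = 0) :
    x = Finsupp.single i 1 ⊗ₜ[R] finsuppScalarLeft R N κ x i := by
  rw [← finsuppScalarLeft_symm_apply_single, LinearEquiv.eq_symm_apply]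
  ext k
  obtain rfl | hk := eq_or_ne k i
  · rw [Finsupp.single_eq_same]
  · rw [hx k hk, Finsupp.single_eq_of_ne hk]

variable [Semiring A] [Module A (Finset κ →₀ R)] [SMulCommClass R A (Finset κ →₀ R)]

theorem smul_apply_erase {j : κ} {a : A} {c : Finset κ → R}
    (ha : ∀ I, a • Finsupp.single I (1 : R) =
      if j ∈ I then c I • Finsupp.single (I.erase j) 1 else 0)
    {I : Finset κ} (hj : j ∈ I) (h : Finset κ →₀ R) : (a • h) (I.erase j) = c I * h I := by
  induction h using Finsupp.induction_linear with
  | zero => simp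
  | add h k ihh ihk => rw [smul_add, Finsupp.add_apply, ihh, ihk, Finsupp.add_apply, mul_add]
  | single J r =>
    rw [← Finsupp.smul_single_one, ← smul_comm, ha]
    by_cases hJ : j ∈ J
    · obtain rfl | hne := eq_or_ne J I
      · simp [hJ, mul_comm]
      · have herase : I.erase j ≠ J.erase j := fun h => hne (Finset.erase_injOn' j hJ hj h.symm)
        simp [hJ, hne, herase]
    · have hne : J ≠ I := fun h => hJ (h ▸ hj)
      simp [hJ, hne]

theorem finsuppScalarLeft_smul_apply_erase {j : κ} {a : A} {c : Finset κ → R}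
    (ha : ∀ I, a • Finsupp.single I (1 : R) =
      if j ∈ I then c I • Finsupp.single (I.erase j) 1 else 0)
    {I : Finset κ} (hj : j ∈ I) (x : (Finset κ →₀ R) ⊗[R] N) :
    finsuppScalarLeft R N (Finset κ) (a • x) (I.erase j) =
      c I • finsuppScalarLeft R N (Finset κ) x I := by
  induction x with
  | zero => simp
  | add x y ihx ihy => rw [smul_add, map_add, Finsupp.add_apply, ihx, ihy, map_add,
      Finsupp.add_apply, smul_add]
  | tmul h n => rw [smul_tmul', finsuppScalarLeft_apply_tmul_apply, smul_apply_erase ha hj,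
      finsuppScalarLeft_apply_tmul_apply, mul_smul]

theorem eq_single_empty_tmul_of_forall_smul_eq_zero {q : κ → A} {c : κ → Finset κ → R}
    (hc : ∀ j I, IsUnit (c j I))
    (hq : ∀ j I, q j • Finsupp.single I (1 : R) =
      if j ∈ I then c j I • Finsupp.single (I.erase j) 1 else 0)
    {x : (Finset κ →₀ R) ⊗[R] N} (hx : ∀ j, q j • x = 0) :
    x = Finsupp.single ∅ 1 ⊗ₜ[R] finsuppScalarLeft R N (Finset κ) x ∅ := by
  refine eq_single_one_tmul_of_forall_ne fun I hI => ?_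
  obtain ⟨j, hj⟩ := Finset.nonempty_iff_ne_empty.2 hI
  rw [← IsUnit.smul_eq_zero (hc j I), ← finsuppScalarLeft_smul_apply_erase (hq j) hj, hx j,
    map_zero, Finsupp.zero_apply]

end Coefficients

/-- The units `c j I` allow for the signs of the contraction action of an exterior algebra outside
characteristic two. -/
theorem stmt_9_general {R A κ N N' : Type*} [CommSemiring R] [Semiring A] [Algebra R A]
    [DecidableEq κ] [Module A (Finset κ →₀ R)] [IsScalarTower R A (Finset κ →₀ R)]
    [SMulCommClass R A (Finset κ →₀ R)]
    {q : κ → A} (hgen : Algebra.adjoin R (Set.range q) = ⊤)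
    {c : κ → Finset κ → R} (hc : ∀ j I, IsUnit (c j I))
    (hq : ∀ j I, q j • Finsupp.single I (1 : R) =
      if j ∈ I then c j I • Finsupp.single (I.erase j) 1 else 0)
    [AddCommMonoid N] [Module R N] [Module A N] [IsScalarTower R A N]
    (hN : ∀ (j : κ) (n : N), q j • n = 0)
    [AddCommMonoid N'] [Module R N'] :
    (∀ (f : N →ₗ[A] (Finset κ →₀ R) ⊗[R] N') (n : N),
      f n ∈ LinearMap.range (TensorProduct.mk R (Finset κ →₀ R) N' (Finsupp.single ∅ 1))) ∧
    (∀ g : N →ₗ[R] N', ∃ f : N →ₗ[A] (Finset κ →₀ R) ⊗[R] N',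
      ∀ n : N, f n = Finsupp.single ∅ 1 ⊗ₜ[R] g n) ∧
    (∀ f : N →ₗ[A] (Finset κ →₀ R) ⊗[R] N', ∃! g : N →ₗ[R] N',
      ∀ n : N, f n = Finsupp.single ∅ 1 ⊗ₜ[R] g n) := by
  let coeffEmpty : (Finset κ →₀ R) ⊗[R] N' →ₗ[R] N' :=
    Finsupp.lapply ∅ ∘ₗ (finsuppScalarLeft R N' (Finset κ)).toLinearMap
  have apply_eq (f : N →ₗ[A] (Finset κ →₀ R) ⊗[R] N') (n : N) :
      f n = Finsupp.single ∅ 1 ⊗ₜ[R] coeffEmpty (f n) :=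
    eq_single_empty_tmul_of_forall_smul_eq_zero hc hq fun j => by rw [← map_smul, hN, map_zero]
  refine ⟨fun f n => ⟨_, (apply_eq f n).symm⟩, fun g => ?_, fun f => ?_⟩
  · let f : N →ₗ[R] (Finset κ →₀ R) ⊗[R] N' := TensorProduct.mk R _ N' (Finsupp.single ∅ 1) ∘ₗ g
    have map_generator_smul : ∀ a ∈ Set.range q, ∀ n, f (a • n) = a • f n := by
      rintro _ ⟨j, rfl⟩ n
      simp [f, hN, smul_tmul', hq]
    exact ⟨{ f with map_smul' := map_smul_of_adjoin_eq_top hgen f map_generator_smul },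
      fun n => rfl⟩
  · refine ⟨coeffEmpty ∘ₗ f.restrictScalars R, apply_eq f, fun g hg => LinearMap.ext fun n => ?_⟩
    simp [coeffEmpty, hg n]

/-- Let `H` carry the `Λ`-module structure determined by `Q_j • r_I = r_{I∖{j}}` if `j ∈ I`
and `0` otherwise, and let `N`, `N'` be `F2`-vector spaces, `N` regarded as a `Λ`-module with
every `Q_j` acting as zero and `H ⊗_{F2} N'` as a `Λ`-module through the factor `H`.  Then
every `Λ`-linear map `f : N → H ⊗_{F2} N'` takes values in the subspace `r_∅ ⊗ N'`, and
consequently the natural map `Hom_{F2}(N, N') → Hom_Λ(N, H ⊗_{F2} N')`, `g ↦ (n ↦ r_∅ ⊗ g n)`,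
is a bijection. -/
theorem stmt_9
    [Module IsoLambda IsoH] [IsScalarTower (ZMod 2) IsoLambda IsoH]
    [SMulCommClass (ZMod 2) IsoLambda IsoH]
    (hH : ∀ (j : ℕ) (I : Finset ℕ),
      isoQ j • isoR I = if j ∈ I then isoR (I.erase j) else 0)
    (N N' : Type) [AddCommGroup N] [Module (ZMod 2) N]
    [Module IsoLambda N] [IsScalarTower (ZMod 2) IsoLambda N]
    (hN : ∀ (j : ℕ) (n : N), isoQ j • n = 0)
    [AddCommGroup N'] [Module (ZMod 2) N'] :
    -- every `Λ`-linear map `f : N → H ⊗ N'` takes values in the subspace `r_∅ ⊗ N'`: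
    (∀ (f : N →ₗ[IsoLambda] (IsoH ⊗[ZMod 2] N')) (n : N),
      f n ∈ LinearMap.range (TensorProduct.mk (ZMod 2) IsoH N' (isoR ∅))) ∧
    -- the natural map `Hom_{F2}(N, N') → Hom_Λ(N, H ⊗ N')`, `g ↦ (n ↦ r_∅ ⊗ g n)`,
    -- is well defined and bijective:
    (∀ g : N →ₗ[ZMod 2] N', ∃ f : N →ₗ[IsoLambda] (IsoH ⊗[ZMod 2] N'),
      ∀ n : N, f n = isoR ∅ ⊗ₜ[ZMod 2] g n) ∧
    (∀ f : N →ₗ[IsoLambda] (IsoH ⊗[ZMod 2] N'), ∃! g : N →ₗ[ZMod 2] N',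
      ∀ n : N, f n = isoR ∅ ⊗ₜ[ZMod 2] g n) :=
  stmt_9_general adjoin_range_isoQ (c := 1) (fun _ _ => isUnit_one) (by simpa [isoR] using hH) hN
end
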